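/- Fix integers m ≥ 1, d ≥ 2 and ν ≥ 1 and a matrix S as below. There exists a constant c > 0 depending only on d, m and ν such that the following holds. Let p be a prime, 𝓕 ∈ 𝔉(S,m) over F_p a system of total degree d with s_{0,1}·s_{1,2}⋯s_{m−1,m} ≠ 0, and let {w_n} = {(u_{n,0},…,u_{n,m})} be the sequence generated by iterating 𝓕 (the same system at each step) from some initial vector, assumed purely periodic with period τ. Then for every positive integer N ≤ τ and every vector a = (a_0,…,a_{m−1}) ∈ F_p^m with a ≠ 0, |S_a(N)| ≤ c·N^{1−β}·p^{α}, where α = (m² + mν + m)/(2ν(m+ν)) and β = 1/(2ν). -/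

import Mathlib

open MvPolynomial

/-- Membership of a polynomial system `F = (F_0, …, F_m)` over `R` in the class `𝔉(S,m)`,
where `s i j` records the entries of the upper triangular matrix `S` (for `i < j`). -/
def IsFSystem {R : Type*} [CommRing R] (m : ℕ) (s : ℕ → ℕ → ℕ)
    (F : Fin (m + 1) → MvPolynomial (Fin (m + 1)) R) : Prop :=
  (∃ g h : R, g ≠ 0 ∧
      F (Fin.last m) = MvPolynomial.C g * MvPolynomial.X (Fin.last m) + MvPolynomial.C h) ∧
  ∀ i : Fin (m + 1), (i : ℕ) < m →
    ∃ (G H Gt : MvPolynomial (Fin (m + 1)) R) (g : R),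
      g ≠ 0 ∧
      F i = MvPolynomial.X i * G + H ∧
      (∀ d ∈ G.support, ∀ j : Fin (m + 1), j ≤ i → d j = 0) ∧
      (∀ d ∈ H.support, ∀ j : Fin (m + 1), j ≤ i → d j = 0) ∧
      G = MvPolynomial.C g *
          (∏ j ∈ Finset.univ.filter (fun j : Fin (m + 1) => i < j),
            MvPolynomial.X j ^ s i.val j.val) + Gt ∧
      (∀ d ∈ Gt.support, ∀ j : Fin (m + 1), i < j → d j < s i.val j.val) ∧
      (∀ d ∈ H.support, ∀ j : Fin (m + 1), i < j → d j ≤ s i.val j.val)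

/-- The iterated polynomials `F_i^{(k)}` of a sequence of polynomial systems:
`F_i^{(0)} = X_i` and `F_i^{(k)} = F_{k,i}(F_0^{(k-1)}, …, F_m^{(k-1)})`. -/
noncomputable def iterSys {R : Type*} [CommRing R] (m : ℕ)
    (Fs : ℕ → Fin (m + 1) → MvPolynomial (Fin (m + 1)) R) :
    ℕ → Fin (m + 1) → MvPolynomial (Fin (m + 1)) R
  | 0 => fun i => MvPolynomial.X i
  | k + 1 => fun i => MvPolynomial.bind₁ (iterSys m Fs k) (Fs (k + 1) i)

/-- The additive character `e_p(z) = exp(2πiz/p)` evaluated at an element of `F_p`. -/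
noncomputable def eP (p : ℕ) (x : ZMod p) : ℂ :=
  Complex.exp (2 * Real.pi * Complex.I * (x.val : ℂ) / (p : ℂ))

/-- `e_M(z) = exp(2πiz/M)` for a natural number `z`. -/
noncomputable def eM (M z : ℕ) : ℂ :=
  Complex.exp (2 * Real.pi * Complex.I * (z : ℂ) / (M : ℂ))

/-- The discrepancy of the first `N` points of a sequence in `[0,1)^s`: the supremum over
boxes `B = [a_1,b_1) × ⋯ × [a_s,b_s) ⊆ [0,1)^s` of `|T(B)/N - vol B|`. -/
noncomputable def discrepancy (s N : ℕ) (P : ℕ → Fin s → ℝ) : ℝ :=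
  sSup {D : ℝ | ∃ a b : Fin s → ℝ,
    (∀ j, 0 ≤ a j ∧ a j ≤ b j ∧ b j ≤ 1) ∧
    D = |(((Finset.range N).filter fun n => ∀ j, a j ≤ P n j ∧ P n j < b j).card : ℝ) / N -
        ∏ j, (b j - a j)|}

/-!
Replacing `w_n` by `w_{n+k}` changes `S_a(N)` by at most `2k`, so up to `2K²` the quantity `K
S_a(N)` is a sum over the orbit of block sums of length `K`. By Hölder's inequality, and because
the orbit points are distinct, its `2ν`-th power is at most `N^(2ν-1)` times the `2ν`-th moment of
the block sums over all of `F_p^(m+1)`. Expand this moment over index tuples. The `O(K^ν)` tuples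
in which every index is repeated are estimated trivially. For any other tuple let `i` be minimal
with `a_i ≠ 0`. The argument of the character is affine in `X_i`, its slope being a nontrivial
linear combination of the products `∏_{t<k} G_i(F^t)`, `k < K`, of degree `O(K^m)`. Summing over
`X_i` leaves only the zeros of the slope, which the Schwartz–Zippel lemma counts. The choice `K ≈
p^(1/(m+ν))` balances the two contributions.

The slope is a nonzero polynomial in every characteristic: by transcendence degree the `F_i` are
algebraically independent, so composition with `F` is injective and never makes the nonconstant
polynomial `G_i` constant; hence the degrees of the products strictly increase with `k`, and the
products are linearly independent.
-/

section PolynomialMap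

variable {σ R : Type*} [CommSemiring R]

theorem eval_eq_of_mem_supported {s : Set σ} {Q : MvPolynomial σ R} (hQ : Q ∈ supported R s)
    {v w : σ → R} (h : Set.EqOn v w s) : eval v Q = eval w Q :=
  eval₂Hom_congr' rfl (fun _ hi _ => h (mem_supported.mp hQ hi)) rfl

/-- The self-map of affine space given by the polynomials `F i`. -/
noncomputable def polyMap (F : σ → MvPolynomial σ R) (w : σ → R) : σ → R := fun i => eval w (F i)

theorem eval_bind₁_iterate (F : σ → MvPolynomial σ R) (k : ℕ) (w : σ → R)
    (Q : MvPolynomial σ R) :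
    eval w ((bind₁ F)^[k] Q) = eval ((polyMap F)^[k] w) Q := by
  induction k generalizing w with
  | zero => rfl
  | succ k ih =>
    rw [Function.iterate_succ_apply', Function.iterate_succ_apply, ← ih]
    exact eval₂Hom_bind₁ _ _ _ _

/-- The product of the first `k` iterated pullbacks of `Q` under `F`. For `Q = G i` in a
triangular system it is the coefficient of `X i` in the `k`-th iterate of `F i`. -/
noncomputable def iterateCoeff (F : σ → MvPolynomial σ R) (Q : MvPolynomial σ R) (k : ℕ) :
    MvPolynomial σ R :=
  ∏ t ∈ Finset.range k, (bind₁ F)^[t] Q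

theorem totalDegree_pos_of_injective {τ : Type*} {φ : MvPolynomial σ R →ₐ[R] MvPolynomial τ R}
    (hφ : Function.Injective φ) {Q : MvPolynomial σ R} (hQ : 0 < Q.totalDegree) :
    0 < (φ Q).totalDegree := by
  contrapose! hQ
  have hC : φ Q = C (coeff 0 (φ Q)) := totalDegree_eq_zero_iff_eq_C.mp (nonpos_iff_eq_zero.mp hQ)
  have hQC : Q = C (coeff 0 (φ Q)) := hφ (hC.trans (φ.commutes _).symm)
  rw [hQC, totalDegree_C]

theorem totalDegree_bind₁_iterate_pos {F : σ → MvPolynomial σ R}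
    (hF : Function.Injective (bind₁ F)) {Q : MvPolynomial σ R} (hQ : 0 < Q.totalDegree) (k : ℕ) :
    0 < ((bind₁ F)^[k] Q).totalDegree := by
  induction k with
  | zero => exact hQ
  | succ k ih =>
    rw [Function.iterate_succ_apply']
    exact totalDegree_pos_of_injective hF ih

theorem totalDegree_bind₁_le {τ : Type*} {f : σ → MvPolynomial τ R} {Q : MvPolynomial σ R} {B : ℕ}
    (hf : ∀ i ∈ Q.vars, (f i).totalDegree ≤ B) :
    (bind₁ f Q).totalDegree ≤ Q.totalDegree * B := by
  rw [← aeval_eq_bind₁, aeval_def, eval₂_eq]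
  refine totalDegree_finsetSum_le fun e he => ?_
  calc (C (coeff e Q) * ∏ i ∈ e.support, f i ^ e i).totalDegree
      ≤ ∑ i ∈ e.support, (f i ^ e i).totalDegree := by
        refine (totalDegree_mul _ _).trans ?_
        rw [totalDegree_C, zero_add]
        exact totalDegree_finsetProd _ _
    _ ≤ ∑ i ∈ e.support, e i * B := Finset.sum_le_sum fun i hi =>
        (totalDegree_pow _ _).trans <| Nat.mul_le_mul_left _ <|
          hf i ((mem_vars_iff_mem_support i).mpr ⟨e, he, hi⟩)
    _ = (∑ i ∈ e.support, e i) * B := (Finset.sum_mul ..).symm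
    _ ≤ Q.totalDegree * B := Nat.mul_le_mul_right _ (le_totalDegree he)

theorem bind₁_iterate (F : σ → MvPolynomial σ R) (k : ℕ) (Q : MvPolynomial σ R) :
    (bind₁ F)^[k] Q = bind₁ (fun i => (bind₁ F)^[k] (X i)) Q := by
  induction k generalizing Q with
  | zero => simp
  | succ k ih =>
    rw [Function.iterate_succ_apply, ih, bind₁_bind₁]
    congr 2 with i : 1
    rw [Function.iterate_succ_apply, bind₁_X_right, ih (F i)]

theorem totalDegree_bind₁_iterate_le {F : σ → MvPolynomial σ R} {s : Set σ} {Q : MvPolynomial σ R}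
    (hQ : Q ∈ supported R s) {t B : ℕ} (hB : ∀ j ∈ s, ((bind₁ F)^[t] (X j)).totalDegree ≤ B) :
    ((bind₁ F)^[t] Q).totalDegree ≤ Q.totalDegree * B := by
  rw [bind₁_iterate]
  exact totalDegree_bind₁_le fun j hj => hB j (mem_supported.mp hQ hj)

theorem mem_supported_Ioi [LinearOrder σ] {i : σ} {Q : MvPolynomial σ R}
    (hQ : ∀ e ∈ Q.support, ∀ j ≤ i, e j = 0) :
    Q ∈ supported R (Set.Ioi i) := by
  refine mem_supported.mpr fun j hj => ?_
  obtain ⟨e, he, hje⟩ := (mem_vars_iff_mem_support j).mp hj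
  exact not_le.mp fun hji => Finsupp.mem_support_iff.mp hje (hQ e he j hji)

theorem totalDegree_pos_of_coeff_ne_zero {Q : MvPolynomial σ R} {e : σ →₀ ℕ}
    (he : e ≠ 0) (hQ : coeff e Q ≠ 0) : 0 < Q.totalDegree := by
  classical
  contrapose! hQ
  rw [totalDegree_eq_zero_iff_eq_C.mp (nonpos_iff_eq_zero.mp hQ), coeff_C, if_neg he.symm]

theorem exists_coeff_ne_zero_of_leading {s : Finset σ} {j : σ} (hj : j ∈ s)
    {n : σ → ℕ} (hn : n j ≠ 0) {g : R} (hg : g ≠ 0) {Q : MvPolynomial σ R}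
    (hQ : ∀ e ∈ Q.support, e j < n j) :
    ∃ e ≠ 0, coeff e (C g * ∏ l ∈ s, X l ^ n l + Q) ≠ 0 := by
  classical
  set e : σ →₀ ℕ := ∑ l ∈ s, Finsupp.single l (n l) with he
  have hej : e j = n j := by
    simp [he, Finsupp.finsetSum_apply, Finsupp.single_apply, hj]
  have hlead : C g * ∏ l ∈ s, X l ^ n l = monomial e g := by
    simp only [X_pow_eq_monomial, ← monomial_sum_one, C_mul_monomial, mul_one, he]
  have hQe : coeff e Q = 0 := notMem_support_iff.mp fun h => (hQ e h).ne hej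
  refine ⟨e, fun h => hn (by rw [← hej, h, Finsupp.coe_zero, Pi.zero_apply]), ?_⟩
  rwa [coeff_add, hlead, coeff_monomial, if_pos rfl, hQe, add_zero]

end PolynomialMap

section LinearIndependence

variable {σ R : Type*} [CommRing R] [IsDomain R]

theorem linearIndependent_of_totalDegree_injective {ι : Type*}
    {f : ι → MvPolynomial σ R} (hf : ∀ i, f i ≠ 0)
    (hdeg : Function.Injective fun i => (f i).totalDegree) : LinearIndependent R f := by
  classical
  rw [linearIndependent_iff']
  intro s g hsum i hi
  by_contra hgi
  obtain ⟨j, hj, hmax⟩ := (s.filter (g · ≠ 0)).exists_max_image (fun i => (f i).totalDegree)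
    ⟨i, Finset.mem_filter.mpr ⟨hi, hgi⟩⟩
  rw [Finset.mem_filter] at hj
  obtain ⟨e, he, hedeg⟩ : ∃ e ∈ (f j).support, (f j).totalDegree = e.sum fun _ n => n :=
    Finset.exists_mem_eq_sup _ (support_nonempty.mpr (hf j)) _
  have hcoeff : coeff e (∑ k ∈ s, g k • f k) = g j * coeff e (f j) := by
    rw [coeff_sum, Finset.sum_eq_single_of_mem j hj.1, coeff_smul, smul_eq_mul]
    intro k hk hkj
    by_cases hgk : g k = 0
    · rw [hgk, zero_smul, coeff_zero]
    · have hlt : (f k).totalDegree < (f j).totalDegree :=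
        lt_of_le_of_ne (hmax k (Finset.mem_filter.mpr ⟨hk, hgk⟩)) (hdeg.ne hkj)
      rw [coeff_smul, coeff_eq_zero_of_totalDegree_lt (hlt.trans_eq hedeg), smul_zero]
  rw [hsum, coeff_zero] at hcoeff
  exact mul_ne_zero hj.2 (mem_support_iff.mp he) hcoeff.symm

theorem linearIndependent_iterateCoeff {F : σ → MvPolynomial σ R}
    (hF : Function.Injective (bind₁ F)) {Q : MvPolynomial σ R} (hQ : 0 < Q.totalDegree) :
    LinearIndependent R (iterateCoeff F Q) := by
  have hpos := totalDegree_bind₁_iterate_pos hF hQ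
  have hne (t : ℕ) : (bind₁ F)^[t] Q ≠ 0 := fun h => by simpa [h] using hpos t
  have hprod (k : ℕ) : iterateCoeff F Q k ≠ 0 := Finset.prod_ne_zero_iff.mpr fun t _ => hne t
  suffices hmono : StrictMono fun k => (iterateCoeff F Q k).totalDegree from
    linearIndependent_of_totalDegree_injective hprod hmono.injective
  refine strictMono_nat_of_lt_succ fun k => ?_
  have hsucc : iterateCoeff F Q (k + 1) = iterateCoeff F Q k * (bind₁ F)^[k] Q :=
    Finset.prod_range_succ _ _
  rw [hsucc, totalDegree_mul_of_isDomain (hprod k) (hne k)]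
  exact Nat.lt_add_of_pos_right (hpos k)

end LinearIndependence

theorem card_Ioi_le_of_lt {σ : Type*} [Preorder σ] [LocallyFiniteOrderTop σ] {i j : σ}
    (hij : i < j) {n : ℕ} (hi : (Finset.Ioi i).card ≤ n + 1) : (Finset.Ioi j).card ≤ n :=
  Nat.le_of_lt_succ <| (Finset.card_lt_card (Finset.Ioi_ssubset_Ioi hij)).trans_le hi

theorem exists_first_ne_zero {ι M : Type*} [LinearOrder ι] [WellFoundedLT ι] [Zero M] {a : ι → M}
    {i₀ : ι} (h : a i₀ ≠ 0) : ∃ i ≤ i₀, a i ≠ 0 ∧ ∀ j < i, a j = 0 := by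
  obtain ⟨i, hile, hi⟩ := exists_minimal_le_of_wellFoundedLT (a · ≠ 0) i₀ h
  exact ⟨i, hile, hi.prop, fun j hj => not_not.mp (hi.not_prop_of_lt hj)⟩

section Triangular

variable {σ R : Type*} [LinearOrder σ] [CommRing R]

/-- A triangular polynomial system, in which `F i = X i * G i + H i` where `G i ≠ 0` and `H i`
involve only variables with index larger than `i`. -/
structure IsTriangular (F G H : σ → MvPolynomial σ R) : Prop where
  eq : ∀ i, F i = X i * G i + H i
  G_mem : ∀ i, G i ∈ supported R (Set.Ioi i)
  H_mem : ∀ i, H i ∈ supported R (Set.Ioi i)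
  G_ne_zero : ∀ i, G i ≠ 0

namespace IsTriangular

variable {F G H : σ → MvPolynomial σ R}

theorem isAlgebraic_X [Finite σ] [IsDomain R] (T : IsTriangular F G H) (i : σ) :
    IsAlgebraic (Algebra.adjoin R (Set.range F)) (X i : MvPolynomial σ R) := by
  set S := Algebra.adjoin R (Set.range F)
  induction i using WellFoundedGT.induction with
  | ind i ih =>
    have hsupp : ∀ Q ∈ supported R (Set.Ioi i), IsAlgebraic S Q := fun Q hQ =>
      (Algebra.adjoin_le (S := (Subalgebra.algebraicClosure S (MvPolynomial σ R)).restrictScalars R)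
        (Set.image_subset_iff.mpr ih)) hQ
    have hF : IsAlgebraic S (F i) :=
      isAlgebraic_algebraMap (⟨F i, Algebra.subset_adjoin ⟨i, rfl⟩⟩ : S)
    have hmul : IsAlgebraic S (G i * X i) := by
      have := hF.sub (hsupp _ (T.H_mem i))
      rwa [T.eq, add_sub_cancel_right, mul_comm] at this
    exact .of_mul (mem_nonZeroDivisors_of_ne_zero (T.G_ne_zero i)) (hsupp _ (T.G_mem i)) hmul

theorem algebraicIndependent [Finite σ] [IsDomain R] (T : IsTriangular F G H) :
    AlgebraicIndependent R F := by
  have : Algebra.IsAlgebraic (Algebra.adjoin R (Set.range F)) (MvPolynomial σ R) := by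
    set S := Algebra.adjoin R (Set.range F)
    have hle : Algebra.adjoin R (Set.range X) ≤
        (Subalgebra.algebraicClosure S (MvPolynomial σ R)).restrictScalars R :=
      Algebra.adjoin_le (Set.range_subset_iff.mpr T.isAlgebraic_X)
    rw [adjoin_range_X] at hle
    exact ⟨fun Q => hle Algebra.mem_top⟩
  exact (Algebra.IsAlgebraic.isTranscendenceBasis_of_lift_le_trdeg_of_finite R F
    (by simp [MvPolynomial.trdeg_of_isDomain])).1

theorem bind₁_injective [Finite σ] [IsDomain R] (T : IsTriangular F G H) :
    Function.Injective (bind₁ F) := by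
  rw [← aeval_eq_bind₁]
  exact T.algebraicIndependent

theorem polyMap_apply (T : IsTriangular F G H) (w : σ → R) (i : σ) :
    polyMap F w i = w i * eval w (G i) + eval w (H i) := by
  simp [polyMap, T.eq i]

theorem eqOn_polyMap (T : IsTriangular F G H) {i : σ} {v w : σ → R}
    (h : Set.EqOn v w (Set.Ioi i)) : Set.EqOn (polyMap F v) (polyMap F w) (Set.Ioi i) := by
  intro j hj
  have hj' : Set.EqOn v w (Set.Ioi j) := h.mono (Set.Ioi_subset_Ioi (le_of_lt hj))
  rw [T.polyMap_apply, T.polyMap_apply, h hj, eval_eq_of_mem_supported (T.G_mem j) hj',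
    eval_eq_of_mem_supported (T.H_mem j) hj']

theorem eqOn_polyMap_iterate (T : IsTriangular F G H) {i : σ} {v w : σ → R}
    (h : Set.EqOn v w (Set.Ioi i)) (k : ℕ) :
    Set.EqOn ((polyMap F)^[k] v) ((polyMap F)^[k] w) (Set.Ioi i) := by
  induction k with
  | zero => exact h
  | succ k ih =>
    rw [Function.iterate_succ_apply', Function.iterate_succ_apply']
    exact T.eqOn_polyMap ih

theorem polyMap_iterate_sub (T : IsTriangular F G H) {i : σ} {v w : σ → R}
    (h : Set.EqOn v w (Set.Ioi i)) (k : ℕ) :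
    (polyMap F)^[k] v i - (polyMap F)^[k] w i =
      (v i - w i) * eval w (iterateCoeff F (G i) k) := by
  induction k with
  | zero => simp [iterateCoeff]
  | succ k ih =>
    have hk := T.eqOn_polyMap_iterate h k
    rw [Function.iterate_succ_apply', Function.iterate_succ_apply', T.polyMap_apply,
      T.polyMap_apply, eval_eq_of_mem_supported (T.G_mem i) hk,
      eval_eq_of_mem_supported (T.H_mem i) hk, add_sub_add_right_eq_sub, ← sub_mul, ih,
      iterateCoeff, iterateCoeff, Finset.prod_range_succ, map_mul, eval_bind₁_iterate, mul_assoc]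

theorem sum_mul_polyMap_iterate_add_single [Fintype σ] (T : IsTriangular F G H) {a : σ → R} {i : σ}
    (ha : ∀ j < i, a j = 0) (w : σ → R) (t : R) (k : ℕ) :
    ∑ j, a j * (polyMap F)^[k] (w + Pi.single i t) j =
      ∑ j, a j * (polyMap F)^[k] w j + t * (a i * eval w (iterateCoeff F (G i) k)) := by
  have hw : Set.EqOn (w + Pi.single i t) w (Set.Ioi i) := fun j hj => by
    simp [Pi.single_eq_of_ne (ne_of_gt hj)]
  rw [← sub_eq_iff_eq_add', ← Finset.sum_sub_distrib, Finset.sum_eq_single_of_mem i (by simp)]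
  · rw [← mul_sub, T.polyMap_iterate_sub hw, Pi.add_apply, Pi.single_eq_same, add_sub_cancel_left]
    ring
  · intro j _ hj
    rcases lt_or_gt_of_ne hj with hlt | hgt
    · simp [ha j hlt]
    · rw [T.eqOn_polyMap_iterate hw k hgt, sub_self]

theorem totalDegree_G_of_isMax (T : IsTriangular F G H) {i : σ} (hi : IsMax i) :
    (G i).totalDegree = 0 := by
  obtain ⟨c, hc⟩ : ∃ c, C c = G i := by
    simpa only [hi.Ioi_eq, supported_empty, Algebra.mem_bot, Set.mem_range, algebraMap_eq] using
      T.G_mem i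
  rw [← hc, totalDegree_C]

theorem totalDegree_H_le [Nontrivial R] (T : IsTriangular F G H) (i : σ) :
    (H i).totalDegree ≤ (F i).totalDegree := by
  -- The substitution `X i ↦ 0` does not raise degrees and turns `F i` into `H i`.
  have hH : bind₁ (Function.update X i 0) (H i) = H i := by
    refine hom_congr_vars (f₁ := (bind₁ _ : _ →ₐ[R] _).toRingHom) (f₂ := RingHom.id _) ?_ ?_ rfl
    · ext; simp
    · intro j hj _
      have hij : j ≠ i := (ne_of_gt (mem_supported.mp (T.H_mem i) hj))
      simp [hij]
  have hF : bind₁ (Function.update X i 0) (F i) = H i := by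
    rw [T.eq, map_add, map_mul, bind₁_X_right, Function.update_self, zero_mul, zero_add, hH]
  calc (H i).totalDegree = (bind₁ (Function.update X i 0) (F i)).totalDegree := by rw [hF]
    _ ≤ (F i).totalDegree * 1 := totalDegree_bind₁_le fun j _ => by
        rcases eq_or_ne j i with rfl | hij
        · simp
        · rw [Function.update_of_ne hij]
          exact (totalDegree_X j).le
    _ = (F i).totalDegree := mul_one _

theorem totalDegree_G_lt [IsDomain R] (T : IsTriangular F G H) (i : σ) :
    (G i).totalDegree < (F i).totalDegree := by
  have hXG : X i * G i = F i - H i := by rw [T.eq, add_sub_cancel_right]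
  calc (G i).totalDegree < (X i * G i).totalDegree := by
        rw [totalDegree_mul_of_isDomain (X_ne_zero i) (T.G_ne_zero i), totalDegree_X]
        exact Nat.lt_add_of_pos_left one_pos
    _ ≤ max (F i).totalDegree (H i).totalDegree := hXG ▸ totalDegree_sub _ _
    _ = (F i).totalDegree := max_eq_left (T.totalDegree_H_le i)

section Degree

variable [IsDomain R] {d : ℕ} {i : σ}

theorem totalDegree_iterateCoeff_le (T : IsTriangular F G H) (hd : (F i).totalDegree ≤ d)
    {B : ℕ → ℕ} (hB : ∀ t, ∀ j > i, ((bind₁ F)^[t] (X j)).totalDegree ≤ B t) (k : ℕ) :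
    (iterateCoeff F (G i) k).totalDegree ≤ ∑ t ∈ Finset.range k, d * B t :=
  (totalDegree_finsetProd _ _).trans <| Finset.sum_le_sum fun t _ =>
    (totalDegree_bind₁_iterate_le (T.G_mem i) (hB t)).trans <|
      Nat.mul_le_mul_right _ ((T.totalDegree_G_lt i).le.trans hd)

theorem totalDegree_bind₁_iterate_X_le (T : IsTriangular F G H) (hd : (F i).totalDegree ≤ d)
    {B : ℕ → ℕ} (hB : ∀ t, ∀ j > i, ((bind₁ F)^[t] (X j)).totalDegree ≤ B t) (k : ℕ) :
    ((bind₁ F)^[k] (X i)).totalDegree ≤ 1 + ∑ t ∈ Finset.range k, d * B t := by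
  induction k with
  | zero => simp
  | succ k ih =>
    have hG : ((bind₁ F)^[k] (G i)).totalDegree ≤ d * B k :=
      (totalDegree_bind₁_iterate_le (T.G_mem i) (hB k)).trans <|
        Nat.mul_le_mul_right _ ((T.totalDegree_G_lt i).le.trans hd)
    have hH : ((bind₁ F)^[k] (H i)).totalDegree ≤ d * B k :=
      (totalDegree_bind₁_iterate_le (T.H_mem i) (hB k)).trans <|
        Nat.mul_le_mul_right _ ((T.totalDegree_H_le i).trans hd)
    rw [Function.iterate_succ_apply, bind₁_X_right, T.eq, iterate_map_add, iterate_map_mul,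
      Finset.sum_range_succ]
    refine (totalDegree_add _ _).trans (max_le ((totalDegree_mul _ _).trans ?_) ?_) <;> omega

theorem totalDegree_bind₁_iterate_X_le_pow [LocallyFiniteOrderTop σ] (T : IsTriangular F G H)
    (hd : ∀ i, (F i).totalDegree ≤ d) {n : ℕ} {i : σ} (hi : (Finset.Ioi i).card ≤ n) (k : ℕ) :
    ((bind₁ F)^[k] (X i)).totalDegree ≤ (1 + d * k) ^ n := by
  induction n generalizing i k with
  | zero =>
    have hmax (t : ℕ) : ∀ j > i, ((bind₁ F)^[t] (X j)).totalDegree ≤ 0 := fun j hj =>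
      absurd (Finset.card_pos.mpr ⟨j, Finset.mem_Ioi.mpr hj⟩) hi.not_gt
    simpa using T.totalDegree_bind₁_iterate_X_le (hd i) hmax k
  | succ n ih =>
    have hlt (t : ℕ) : ∀ j > i, ((bind₁ F)^[t] (X j)).totalDegree ≤ (1 + d * t) ^ n :=
      fun j hj => ih (card_Ioi_le_of_lt hj hi) t
    calc ((bind₁ F)^[k] (X i)).totalDegree
        ≤ 1 + ∑ t ∈ Finset.range k, d * (1 + d * t) ^ n :=
          T.totalDegree_bind₁_iterate_X_le (hd i) hlt k
      _ ≤ 1 + k * (d * (1 + d * k) ^ n) := by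
          gcongr
          calc ∑ t ∈ Finset.range k, d * (1 + d * t) ^ n
              ≤ ∑ _t ∈ Finset.range k, d * (1 + d * k) ^ n := by
                gcongr with t ht
                exact (Finset.mem_range.mp ht).le
            _ = k * (d * (1 + d * k) ^ n) := by simp
      _ ≤ (1 + d * k) ^ n + k * (d * (1 + d * k) ^ n) := by
          gcongr
          exact Nat.one_le_pow _ _ (by omega)
      _ = (1 + d * k) ^ (n + 1) := by ring

theorem totalDegree_iterateCoeff_le_pow [LocallyFiniteOrderTop σ] (T : IsTriangular F G H)
    (hd : ∀ i, (F i).totalDegree ≤ d) {n : ℕ} (hi : (Finset.Ioi i).card ≤ n) (k : ℕ) :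
    (iterateCoeff F (G i) k).totalDegree ≤ (d * k) ^ n := by
  cases n with
  | zero =>
    have hmax (t : ℕ) : ∀ j > i, ((bind₁ F)^[t] (X j)).totalDegree ≤ 0 := fun j hj =>
      absurd (Finset.card_pos.mpr ⟨j, Finset.mem_Ioi.mpr hj⟩) hi.not_gt
    exact (T.totalDegree_iterateCoeff_le (hd i) hmax k).trans (by simp)
  | succ n =>
    have hd1 : 1 ≤ d := Nat.one_le_of_lt ((T.totalDegree_G_lt i).trans_le (hd i))
    have hlt (t : ℕ) : ∀ j > i, ((bind₁ F)^[t] (X j)).totalDegree ≤ (1 + d * t) ^ n :=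
      fun j hj => T.totalDegree_bind₁_iterate_X_le_pow hd (card_Ioi_le_of_lt hj hi) t
    calc (iterateCoeff F (G i) k).totalDegree
        ≤ ∑ t ∈ Finset.range k, d * (1 + d * t) ^ n := T.totalDegree_iterateCoeff_le (hd i) hlt k
      _ ≤ ∑ _t ∈ Finset.range k, d * (d * k) ^ n := by
          gcongr with t ht
          calc 1 + d * t ≤ d * (t + 1) := by linarith
            _ ≤ d * k := Nat.mul_le_mul_left d (Finset.mem_range.mp ht)
      _ = (d * k) ^ (n + 1) := by
          rw [Finset.sum_const, Finset.card_range, smul_eq_mul]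
          ring

end Degree

end IsTriangular

end Triangular

section AllRepeated

variable {ι κ : Type*}

/-- Every value of `z` is attained at least twice. Tuples of this kind are the diagonal terms in
the expansion of an even moment of an exponential sum. -/
def AllRepeated (z : ι → κ) : Prop := ∀ j, ∃ j' ≠ j, z j' = z j

theorem AllRepeated.two_mul_card_image_le [Fintype ι] [DecidableEq κ] {z : ι → κ}
    (hz : AllRepeated z) : 2 * (Finset.univ.image z).card ≤ Fintype.card ι := by
  refine Finset.mul_card_image_le_card Finset.univ 2 fun y hy => ?_
  obtain ⟨j, -, rfl⟩ := Finset.mem_image.mp hy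
  obtain ⟨j', hne, hj'⟩ := hz j
  exact Finset.one_lt_card.mpr ⟨j', by simp [hj'], j, by simp, hne⟩

theorem AllRepeated.exists_factorization [Fintype ι] [Nonempty κ] {n : ℕ}
    (hι : Fintype.card ι = 2 * n) {z : ι → κ} (hz : AllRepeated z) :
    ∃ (π : ι → Fin n) (g : Fin n → κ), g ∘ π = z := by
  classical
  have hcard : Fintype.card (Finset.univ.image z) ≤ Fintype.card (Fin n) := by
    have := hz.two_mul_card_image_le
    rw [Fintype.card_coe, Fintype.card_fin]
    omega
  obtain ⟨e⟩ := Function.Embedding.nonempty_of_card_le hcard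
  refine ⟨fun j => e ⟨z j, by simp⟩, Function.extend e Subtype.val fun _ => Classical.arbitrary κ,
    funext fun j => ?_⟩
  exact e.injective.extend_apply _ _ _

theorem card_allRepeated_le [Fintype ι] [DecidableEq ι] [Fintype κ] [Nonempty κ] {n : ℕ}
    (hι : Fintype.card ι = 2 * n) [DecidablePred (AllRepeated : (ι → κ) → Prop)] :
    (Finset.univ.filter (AllRepeated : (ι → κ) → Prop)).card ≤
      n ^ (2 * n) * Fintype.card κ ^ n := by
  classical
  calc (Finset.univ.filter (AllRepeated : (ι → κ) → Prop)).card
      ≤ (Finset.univ.image fun x : (ι → Fin n) × (Fin n → κ) => x.2 ∘ x.1).card := by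
        refine Finset.card_le_card fun z hz => ?_
        obtain ⟨π, g, hπg⟩ := (Finset.mem_filter.mp hz).2.exists_factorization hι
        exact Finset.mem_image.mpr ⟨(π, g), Finset.mem_univ _, hπg⟩
    _ ≤ Fintype.card ((ι → Fin n) × (Fin n → κ)) := Finset.card_image_le
    _ = n ^ (2 * n) * Fintype.card κ ^ n := by simp [hι]

theorem allRepeated_of_sum_smul_eq_zero [Fintype ι] {R V : Type*} [Ring R] [AddCommGroup V]
    [Module R V] {v : κ → V} (hv : LinearIndependent R v) {ε : ι → R} (hε : ∀ j, ε j ≠ 0)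
    {z : ι → κ} (h : ∑ j, ε j • v (z j) = 0) : AllRepeated z := by
  classical
  intro j
  by_contra! hj
  have hzero : ∑ j', Finsupp.single (z j') (ε j') = 0 := by
    refine linearIndependent_iff.mp hv _ ?_
    simpa only [map_sum, Finsupp.linearCombination_single] using h
  have heval := congrArg (· (z j)) hzero
  simp only [Finsupp.coe_zero, Pi.zero_apply, Finsupp.finsetSum_apply] at heval
  rw [Finset.sum_eq_single_of_mem j (Finset.mem_univ j)
    fun j' _ hj' => Finsupp.single_eq_of_ne' (hj j' hj'), Finsupp.single_eq_same] at heval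
  exact hε j heval

end AllRepeated

section CharacterSum

theorem norm_sum_addChar_le_card_zeros {R W : Type*} [CommRing R] [IsDomain R] [Finite R]
    [DecidableEq R] [Fintype W] [AddGroup W] {ψ : AddChar R ℂ} (hψ : ψ.IsPrimitive) {A Q : W → R}
    {s : R → W} (hs : ∀ t w, A (w + s t) = A w + t * Q w) :
    ‖∑ w, ψ (A w)‖ ≤ (Finset.univ.filter fun w => Q w = 0).card := by
  cases nonempty_fintype R
  have hshift (t : R) : ∑ w, ψ (A w) = ∑ w, ψ (A w) * ψ (t * Q w) := by
    rw [← Equiv.sum_comp (Equiv.addRight (s t)) fun w => ψ (A w)]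
    simp only [Equiv.coe_addRight, hs, AddChar.map_add_eq_mul]
  have hq : (Fintype.card R : ℂ) ≠ 0 := Nat.cast_ne_zero.mpr Fintype.card_ne_zero
  have havg : (Fintype.card R : ℂ) * ∑ w, ψ (A w) =
      Fintype.card R * ∑ w with Q w = 0, ψ (A w) := by
    calc (Fintype.card R : ℂ) * ∑ w, ψ (A w) = ∑ t : R, ∑ w, ψ (A w) * ψ (t * Q w) := by
          rw [← Finset.sum_congr rfl fun t _ => hshift t, Finset.sum_const, nsmul_eq_mul,
            Finset.card_univ]
      _ = ∑ w, ψ (A w) * ∑ t : R, ψ (t * Q w) := by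
          rw [Finset.sum_comm]
          simp only [Finset.mul_sum]
      _ = Fintype.card R * ∑ w with Q w = 0, ψ (A w) := by
          simp only [AddChar.sum_mulShift _ hψ, Finset.sum_filter, Finset.mul_sum]
          refine Finset.sum_congr rfl fun w _ => ?_
          split_ifs <;> simp [mul_comm]
  rw [mul_left_cancel₀ hq havg]
  refine (norm_sum_le _ _).trans_eq ?_
  simp [AddChar.norm_apply]

theorem card_filter_eval_eq_zero_le {R : Type*} [CommRing R] [IsDomain R] [Fintype R]
    [DecidableEq R] {n : ℕ} {P : MvPolynomial (Fin (n + 1)) R} (hP : P ≠ 0) :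
    (Finset.univ.filter fun w => eval w P = 0).card ≤ P.totalDegree * Fintype.card R ^ n := by
  have hq : (0 : ℚ≥0) < Fintype.card R := by exact_mod_cast Fintype.card_pos
  have h := schwartz_zippel_totalDegree hP Finset.univ
  rw [Fintype.piFinset_univ, Finset.card_univ, div_le_div_iff₀ (by positivity) hq, pow_succ,
    ← mul_assoc] at h
  exact_mod_cast le_of_mul_le_mul_right h hq

theorem addChar_map_sum {M N ι : Type*} [AddCommMonoid M] [CommMonoid N] (ψ : AddChar M N)
    (s : Finset ι) (f : ι → M) : ψ (∑ j ∈ s, f j) = ∏ j ∈ s, ψ (f j) :=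
  map_prod ψ.toMonoidHom (fun j => Multiplicative.ofAdd (f j)) s

/-- The signs in the expansion of `‖S‖ ^ (2 * n) = S ^ n * conj S ^ n` over index tuples, each
index in the left copy of `Fin n` coming from a factor `S`, each in the right copy from `conj S`. -/
def momentSign (R : Type*) [Ring R] (n : ℕ) : Fin n ⊕ Fin n → R := Sum.elim 1 (-1)

theorem momentSign_ne_zero {R : Type*} [Ring R] [Nontrivial R] {n : ℕ} (j : Fin n ⊕ Fin n) :
    momentSign R n j ≠ 0 := by
  cases j <;> simp [momentSign]

theorem norm_sum_addChar_pow {R κ : Type*} [Ring R] [Finite R] [Fintype κ]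
    (ψ : AddChar R ℂ) (x : κ → R) (n : ℕ) :
    ((‖∑ k, ψ (x k)‖ ^ (2 * n) : ℝ) : ℂ) =
      ∑ z : Fin n ⊕ Fin n → κ, ψ (∑ j, momentSign R n j * x (z j)) := by
  simp only [addChar_map_sum]
  rw [← Fintype.prod_sum fun j k => ψ (momentSign R n j * x k), Fintype.prod_sum_type]
  simp only [momentSign, Sum.elim_inl, Sum.elim_inr, Pi.one_apply, Pi.neg_apply, one_mul,
    neg_one_mul, AddChar.map_neg_eq_conj, ← map_sum, Finset.prod_const, Finset.card_univ,
    Fintype.card_fin]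
  rw [← mul_pow, Complex.mul_conj', pow_mul, Complex.ofReal_pow, Complex.ofReal_pow]

theorem sum_norm_sum_addChar_pow_le {R κ W : Type*} [Ring R] [Finite R] [Fintype κ] [Nonempty κ]
    [Fintype W] (ψ : AddChar R ℂ) (A : κ → W → R) (n : ℕ) {B : ℝ} (hB : 0 ≤ B)
    (h : ∀ z : Fin n ⊕ Fin n → κ, ¬ AllRepeated z →
      ‖∑ w, ψ (∑ j, momentSign R n j * A (z j) w)‖ ≤ B) :
    ∑ w, ‖∑ k, ψ (A k w)‖ ^ (2 * n) ≤
      n ^ (2 * n) * Fintype.card κ ^ n * Fintype.card W + Fintype.card κ ^ (2 * n) * B := by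
  classical
  set S : (Fin n ⊕ Fin n → κ) → ℂ := fun z => ∑ w, ψ (∑ j, momentSign R n j * A (z j) w)
  have hexp : ((∑ w, ‖∑ k, ψ (A k w)‖ ^ (2 * n) : ℝ) : ℂ) = ∑ z, S z := by
    simp only [Complex.ofReal_sum, norm_sum_addChar_pow]
    exact Finset.sum_comm
  have htriv (z : Fin n ⊕ Fin n → κ) : ‖S z‖ ≤ Fintype.card W :=
    (norm_sum_le _ _).trans_eq (by simp [AddChar.norm_apply])
  have hcard : ((Finset.univ.filter (AllRepeated : (Fin n ⊕ Fin n → κ) → Prop)).card : ℝ) ≤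
      n ^ (2 * n) * Fintype.card κ ^ n := by
    exact_mod_cast card_allRepeated_le (by simp [two_mul])
  calc ∑ w, ‖∑ k, ψ (A k w)‖ ^ (2 * n)
      = ‖∑ z, S z‖ := by
        rw [← hexp, Complex.norm_of_nonneg (by positivity)]
    _ ≤ ∑ z, ‖S z‖ := norm_sum_le _ _
    _ = ∑ z with AllRepeated z, ‖S z‖ + ∑ z with ¬ AllRepeated z, ‖S z‖ :=
        (Finset.sum_filter_add_sum_filter_not _ _ _).symm
    _ ≤ ∑ z : Fin n ⊕ Fin n → κ with AllRepeated z, (Fintype.card W : ℝ) +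
          ∑ _z : Fin n ⊕ Fin n → κ, B := by
        refine add_le_add (Finset.sum_le_sum fun z _ => htriv z) ?_
        exact (Finset.sum_le_sum fun z hz => h z (Finset.mem_filter.mp hz).2).trans
          (Finset.sum_le_sum_of_subset_of_nonneg (Finset.filter_subset _ _) fun _ _ _ => hB)
    _ ≤ n ^ (2 * n) * Fintype.card κ ^ n * Fintype.card W + Fintype.card κ ^ (2 * n) * B := by
        simp only [Finset.sum_const, nsmul_eq_mul, Finset.card_univ, Fintype.card_fun,
          Fintype.card_sum, Fintype.card_fin, ← two_mul, Nat.cast_pow]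
        gcongr

end CharacterSum

section Orbit

theorem iterate_eq_of_succ_eq {X : Type*} {f : X → X} {u : ℕ → X} (hu : ∀ n, u (n + 1) = f (u n))
    (n k : ℕ) : u (n + k) = f^[k] (u n) := by
  induction k with
  | zero => rfl
  | succ k ih => rw [Function.iterate_succ_apply', ← ih, ← hu, add_assoc]

theorem injOn_range_of_least_period {X : Type*} {f : X → X} {u : ℕ → X}
    (hu : ∀ n, u (n + 1) = f (u n)) {τ : ℕ} (hτ : 0 < τ) (hper : u τ = u 0)
    (hmin : ∀ t, 0 < t → (∀ n, u (n + t) = u n) → τ ≤ t) {N : ℕ} (hN : N ≤ τ) :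
    Set.InjOn u (Finset.range N) := by
  have hu0 : u = (f^[·] (u 0)) := funext fun n => by
    rw [← iterate_eq_of_succ_eq hu, zero_add]
  have hτper : Function.IsPeriodicPt f τ (u 0) := (congrFun hu0 τ).symm.trans hper
  have hle : N ≤ Function.minimalPeriod f (u 0) :=
    hN.trans <| hmin _ (hτper.minimalPeriod_pos hτ) fun n => by
      rw [hu0]
      exact Function.iterate_add_minimalPeriod_eq
  rw [hu0, Finset.coe_range]
  exact Function.iterate_injOn_Iio_minimalPeriod.mono (Set.Iio_subset_Iio hle)

theorem pow_sum_orbit_le {W : Type*} [Fintype W] {f : W → ℝ} (hf : ∀ w, 0 ≤ f w) {u : ℕ → W}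
    {N : ℕ} (hu : Set.InjOn u (Finset.range N)) (k : ℕ) :
    (∑ n ∈ Finset.range N, f (u n)) ^ (k + 1) ≤ N ^ k * ∑ w, f w ^ (k + 1) := by
  classical
  calc (∑ n ∈ Finset.range N, f (u n)) ^ (k + 1)
      ≤ (Finset.range N).card ^ k * ∑ n ∈ Finset.range N, f (u n) ^ (k + 1) :=
        pow_sum_le_card_mul_sum_pow (fun n _ => hf (u n)) k
    _ = N ^ k * ∑ w ∈ (Finset.range N).image u, f w ^ (k + 1) := by
        rw [Finset.sum_image hu, Finset.card_range]
    _ ≤ N ^ k * ∑ w, f w ^ (k + 1) := by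
        gcongr
        · exact fun _ _ _ => pow_nonneg (hf _) _
        · exact Finset.subset_univ _

theorem norm_sum_range_shift_sub_le {E : Type*} [SeminormedAddCommGroup E] {z : ℕ → E}
    (hz : ∀ n, ‖z n‖ ≤ 1) (N k : ℕ) :
    ‖∑ n ∈ Finset.range N, z n - ∑ n ∈ Finset.range N, z (n + k)‖ ≤ 2 * k := by
  induction k with
  | zero => simp
  | succ k ih =>
    have hstep : ∑ n ∈ Finset.range N, z (n + (k + 1)) =
        ∑ n ∈ Finset.range N, z (n + k) + z (N + k) - z k := by
      rw [← Finset.sum_range_succ fun n => z (n + k), Finset.sum_range_succ', zero_add,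
        add_sub_cancel_right]
      simp only [add_assoc, add_comm 1]
    calc ‖∑ n ∈ Finset.range N, z n - ∑ n ∈ Finset.range N, z (n + (k + 1))‖
        = ‖(∑ n ∈ Finset.range N, z n - ∑ n ∈ Finset.range N, z (n + k)) +
            (z k - z (N + k))‖ := by rw [hstep]; congr 1; abel
      _ ≤ 2 * k + (1 + 1) := norm_add_le_of_le ih (norm_sub_le_of_le (hz _) (hz _))
      _ = 2 * ↑(k + 1) := by push_cast; ring

theorem mul_norm_sum_range_le {E : Type*} [SeminormedAddCommGroup E] [NormedSpace ℝ E] {z : ℕ → E}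
    (hz : ∀ n, ‖z n‖ ≤ 1) (N K : ℕ) :
    K * ‖∑ n ∈ Finset.range N, z n‖ ≤
      ∑ n ∈ Finset.range N, ‖∑ k : Fin K, z (n + k)‖ + 2 * K ^ 2 := by
  have hk (k : Fin K) : ‖∑ n ∈ Finset.range N, z n - ∑ n ∈ Finset.range N, z (n + k)‖ ≤ 2 * K :=
    (norm_sum_range_shift_sub_le hz N k).trans (by gcongr; exact k.2.le)
  set Z := ∑ n ∈ Finset.range N, z n
  have hsplit : K • Z = ∑ k : Fin K, ∑ n ∈ Finset.range N, z (n + k) +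
      ∑ k : Fin K, (Z - ∑ n ∈ Finset.range N, z (n + k)) := by
    simp
  calc K * ‖Z‖ = ‖K • Z‖ := by
        rw [← Nat.cast_smul_eq_nsmul ℝ, norm_smul, Real.norm_natCast]
    _ ≤ ∑ n ∈ Finset.range N, ‖∑ k : Fin K, z (n + k)‖ + K * (2 * K) := by
      rw [hsplit, Finset.sum_comm]
      refine norm_add_le_of_le (norm_sum_le _ _) ((norm_sum_le _ _).trans ?_)
      exact (Finset.sum_le_card_nsmul _ _ _ fun k _ => hk k).trans_eq (by simp)
    _ = ∑ n ∈ Finset.range N, ‖∑ k : Fin K, z (n + k)‖ + 2 * K ^ 2 := by ring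

end Orbit

section Numerics

theorem min_le_rpow_mul_rpow {x y t : ℝ} (hx : 0 ≤ x) (hy : 0 ≤ y) (h0 : 0 ≤ t) (h1 : t ≤ 1) :
    min x y ≤ x ^ (1 - t) * y ^ t := by
  have hmin : 0 ≤ min x y := le_min hx hy
  have h1' : 0 ≤ 1 - t := sub_nonneg.mpr h1
  calc min x y = min x y ^ (1 - t) * min x y ^ t := by
        rw [← Real.rpow_add_of_nonneg hmin h1' h0, sub_add_cancel, Real.rpow_one]
    _ ≤ x ^ (1 - t) * y ^ t := by
        gcongr
        · exact min_le_left x y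
        · exact min_le_right x y

theorem rpow_mul_rpow_pow {x y t : ℝ} (hx : 0 ≤ x) (hy : 0 ≤ y) {n : ℕ} (hn : 1 ≤ n)
    (ht : t * n = 1) : (x ^ (1 - t) * y ^ t) ^ n = x ^ (n - 1) * y := by
  rw [mul_pow, ← Real.rpow_mul_natCast hx, ← Real.rpow_mul_natCast hy, sub_mul, ht, one_mul,
    Real.rpow_one, ← Nat.cast_pred hn, Real.rpow_natCast]

theorem exists_nat_le_le_two_mul {r : ℝ} (hr : 1 ≤ r) : ∃ K : ℕ, 1 ≤ K ∧ K ≤ r ∧ r ≤ 2 * K := by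
  have hK : 1 ≤ ⌊r⌋₊ := Nat.le_floor (by exact_mod_cast hr)
  have hK' : (1 : ℝ) ≤ ⌊r⌋₊ := by exact_mod_cast hK
  have hlt := Nat.lt_floor_add_one r
  exact ⟨⌊r⌋₊, hK, Nat.floor_le (by positivity), by linarith⟩

theorem rpow_pow_rpow {q : ℝ} (hq : 0 ≤ q) (m : ℕ) {ν : ℕ} (hν : 1 ≤ ν) :
    ((q ^ (1 / ((m : ℝ) + ν))) ^ (m ^ 2 + m * ν + m)) ^ (1 / (2 * (ν : ℝ))) =
      q ^ (((m : ℝ) ^ 2 + m * ν + m) / (2 * ν * (m + ν))) := by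
  rw [← Real.rpow_mul_natCast hq, ← Real.rpow_mul hq]
  congr 1
  push_cast
  field_simp

theorem le_of_moment_bound {m ν K : ℕ} (hm : m ≠ 0) (hν : 1 ≤ ν) {x r S W C : ℝ} (hx : 0 ≤ x)
    (hK1 : 1 ≤ K) (hKr : K ≤ r) (hrK : r ≤ 2 * K) (hC : 1 ≤ C) (hSx : S ≤ x)
    (hSW : K * S ≤ W + 2 * K ^ 2)
    (hmom : W ^ (2 * ν) ≤ x ^ (2 * ν - 1) * (C * K ^ ν * (r ^ (m + ν)) ^ (m + 1))) :
    S ≤ (2 * C + 2) * (x ^ (1 - 1 / (2 * (ν : ℝ))) *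
      (r ^ (m ^ 2 + m * ν + m)) ^ (1 / (2 * (ν : ℝ)))) := by
  have hK1' : (1 : ℝ) ≤ K := by exact_mod_cast hK1
  have hν1 : (1 : ℝ) ≤ ν := by exact_mod_cast hν
  have hr : 1 ≤ r := hK1'.trans hKr
  set P : ℝ := r ^ (m ^ 2 + m * ν + m) with hP
  set M : ℝ := x ^ (1 - 1 / (2 * (ν : ℝ))) * P ^ (1 / (2 * (ν : ℝ)))
  have hM0 : 0 ≤ M := by positivity
  have hMpow : M ^ (2 * ν) = x ^ (2 * ν - 1) * P :=
    rpow_mul_rpow_pow hx (by positivity) (by omega) (by push_cast; field_simp)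
  have hWM : W ≤ 2 * C * K * M := by
    refine le_of_pow_le_pow_left₀ (n := 2 * ν) (by omega) (by positivity) ?_
    calc W ^ (2 * ν) ≤ x ^ (2 * ν - 1) * (C * K ^ ν * (r ^ (m + ν)) ^ (m + 1)) := hmom
      _ = C * K ^ ν * r ^ ν * M ^ (2 * ν) := by rw [hMpow, hP]; ring
      _ ≤ C ^ (2 * ν) * K ^ ν * (2 ^ ν * (2 * K) ^ ν) * M ^ (2 * ν) := by
        gcongr
        · exact le_self_pow₀ hC (by omega)
        · exact (pow_le_pow_left₀ (by positivity) hrK ν).trans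
            (le_mul_of_one_le_left (by positivity) (one_le_pow₀ one_le_two))
      _ = (2 * C * K * M) ^ (2 * ν) := by ring
  have hS : S ≤ 2 * C * M + 2 * K :=
    le_of_mul_le_mul_left (by linarith) (by positivity : (0 : ℝ) < K)
  have hmin : min x P ≤ M := min_le_rpow_mul_rpow hx (by positivity) (by positivity) <| by
    rw [div_le_one (by positivity)]
    linarith
  rcases min_le_iff.mp hmin with hxM | hPM
  · nlinarith
  · have hKM : (K : ℝ) ≤ M := (hKr.trans (le_self_pow₀ hr (by positivity))).trans hPM
    linarith

end Numerics

section BlockSums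

variable {R : Type*} [Field R] [Fintype R] {m d : ℕ}
  {F G H : Fin (m + 1) → MvPolynomial (Fin (m + 1)) R} {i : Fin (m + 1)} {a : Fin (m + 1) → R}
  {ψ : AddChar R ℂ}

namespace IsTriangular

theorem norm_sum_addChar_le_of_not_allRepeated (T : IsTriangular F G H)
    (hd : ∀ i, (F i).totalDegree ≤ d) (hG : 0 < (G i).totalDegree) (hai : a i ≠ 0)
    (ha : ∀ j < i, a j = 0) (hψ : ψ.IsPrimitive) {K : ℕ} {ι : Type*} [Fintype ι] {ε : ι → R}
    (hε : ∀ l, ε l ≠ 0) {z : ι → Fin K} (hz : ¬ AllRepeated z) :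
    ‖∑ w, ψ (∑ l, ε l * ∑ j, a j * (polyMap F)^[z l] w j)‖ ≤
      (d * K) ^ m * Fintype.card R ^ m := by
  classical
  set P : MvPolynomial (Fin (m + 1)) R := ∑ l, (ε l * a i) • iterateCoeff F (G i) (z l) with hP
  have hP0 : P ≠ 0 := fun h => hz <| allRepeated_of_sum_smul_eq_zero
    ((linearIndependent_iterateCoeff T.bind₁_injective hG).comp _ Fin.val_injective)
    (fun l => mul_ne_zero (hε l) hai) h
  have hcard : (Finset.Ioi i).card ≤ m := by
    rw [Fin.card_Ioi]
    omega
  have hPdeg : P.totalDegree ≤ (d * K) ^ m :=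
    totalDegree_finsetSum_le fun l _ => (totalDegree_smul_le _ _).trans <|
      (T.totalDegree_iterateCoeff_le_pow hd hcard (z l)).trans <|
        Nat.pow_le_pow_left (Nat.mul_le_mul_left d (z l).2.le) m
  have hshift (t : R) (w : Fin (m + 1) → R) :
      ∑ l, ε l * ∑ j, a j * (polyMap F)^[z l] (w + Pi.single i t) j =
        ∑ l, ε l * ∑ j, a j * (polyMap F)^[z l] w j + t * eval w P := by
    simp only [T.sum_mul_polyMap_iterate_add_single ha, mul_add, Finset.sum_add_distrib, hP,
      map_sum, smul_eval, Finset.mul_sum]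
    congr 1
    exact Finset.sum_congr rfl fun l _ => by ring
  calc ‖∑ w, ψ (∑ l, ε l * ∑ j, a j * (polyMap F)^[z l] w j)‖
      ≤ (Finset.univ.filter fun w => eval w P = 0).card :=
        norm_sum_addChar_le_card_zeros hψ hshift
    _ ≤ (d * K) ^ m * Fintype.card R ^ m := by
        exact_mod_cast (card_filter_eval_eq_zero_le hP0).trans (Nat.mul_le_mul_right _ hPdeg)

theorem sum_norm_sum_addChar_pow_le (T : IsTriangular F G H)
    (hd : ∀ i, (F i).totalDegree ≤ d) (hG : 0 < (G i).totalDegree) (hai : a i ≠ 0)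
    (ha : ∀ j < i, a j = 0) (hψ : ψ.IsPrimitive) (ν : ℕ) {K : ℕ} (hK : 1 ≤ K)
    (hKq : (K : ℝ) ^ (m + ν) ≤ Fintype.card R) :
    ∑ w, ‖∑ k : Fin K, ψ (∑ j, a j * (polyMap F)^[k] w j)‖ ^ (2 * ν) ≤
      (ν ^ (2 * ν) + d ^ m) * K ^ ν * Fintype.card R ^ (m + 1) := by
  have : NeZero K := ⟨by omega⟩
  set q : ℝ := (Fintype.card R : ℝ) with hq
  calc ∑ w, ‖∑ k : Fin K, ψ (∑ j, a j * (polyMap F)^[k] w j)‖ ^ (2 * ν)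
      ≤ ν ^ (2 * ν) * K ^ ν * q ^ (m + 1) + K ^ (2 * ν) * ((d * K) ^ m * q ^ m) := by
        simpa [hq] using _root_.sum_norm_sum_addChar_pow_le ψ
          (fun (k : Fin K) w => ∑ j, a j * (polyMap F)^[k] w j) ν (by positivity)
          fun z hz => T.norm_sum_addChar_le_of_not_allRepeated hd hG hai ha hψ
            momentSign_ne_zero hz
    _ = ν ^ (2 * ν) * K ^ ν * q ^ (m + 1) + d ^ m * K ^ ν * q ^ m * K ^ (m + ν) := by ring
    _ ≤ ν ^ (2 * ν) * K ^ ν * q ^ (m + 1) + d ^ m * K ^ ν * q ^ m * q := by gcongr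
    _ = (ν ^ (2 * ν) + d ^ m) * K ^ ν * q ^ (m + 1) := by ring

theorem pow_sum_norm_sum_addChar_orbit_le (T : IsTriangular F G H)
    (hd : ∀ i, (F i).totalDegree ≤ d) (hG : 0 < (G i).totalDegree) (hai : a i ≠ 0)
    (ha : ∀ j < i, a j = 0) (hψ : ψ.IsPrimitive) {ν : ℕ} (hν : 1 ≤ ν) {K : ℕ} (hK : 1 ≤ K)
    (hKq : (K : ℝ) ^ (m + ν) ≤ Fintype.card R) {u : ℕ → Fin (m + 1) → R}
    (hu : ∀ n, u (n + 1) = polyMap F (u n)) {N : ℕ} (hinj : Set.InjOn u (Finset.range N)) :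
    (∑ n ∈ Finset.range N, ‖∑ k : Fin K, ψ (∑ j, a j * u (n + k) j)‖) ^ (2 * ν) ≤
      N ^ (2 * ν - 1) * ((ν ^ (2 * ν) + d ^ m) * K ^ ν * Fintype.card R ^ (m + 1)) := by
  have hpow := pow_sum_orbit_le
    (f := fun w => ‖∑ k : Fin K, ψ (∑ j, a j * (polyMap F)^[k] w j)‖)
    (fun _ => norm_nonneg _) hinj (2 * ν - 1)
  rw [Nat.sub_add_cancel (by omega)] at hpow
  simp only [iterate_eq_of_succ_eq hu]
  refine hpow.trans ?_
  gcongr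
  exact T.sum_norm_sum_addChar_pow_le hd hG hai ha hψ ν hK hKq

theorem norm_sum_addChar_orbit_le (T : IsTriangular F G H) (hd : ∀ i, (F i).totalDegree ≤ d)
    (hG : 0 < (G i).totalDegree) (hai : a i ≠ 0) (ha : ∀ j < i, a j = 0) (hψ : ψ.IsPrimitive)
    {ν : ℕ} (hν : 1 ≤ ν) {u : ℕ → Fin (m + 1) → R} (hu : ∀ n, u (n + 1) = polyMap F (u n)) {N : ℕ}
    (hinj : Set.InjOn u (Finset.range N)) :
    ‖∑ n ∈ Finset.range N, ψ (∑ j, a j * u n j)‖ ≤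
      (2 * ((ν : ℝ) ^ (2 * ν) + (d : ℝ) ^ m) + 2) * (N : ℝ) ^ ((1 : ℝ) - 1 / (2 * (ν : ℝ))) *
        (Fintype.card R : ℝ) ^ (((m : ℝ) ^ 2 + (m : ℝ) * (ν : ℝ) + (m : ℝ)) /
          (2 * (ν : ℝ) * ((m : ℝ) + (ν : ℝ)))) := by
  have hq1 : (1 : ℝ) ≤ (Fintype.card R : ℝ) := by exact_mod_cast Fintype.card_pos
  have hnorm (n : ℕ) : ‖ψ (∑ j, a j * u n j)‖ ≤ 1 := (ψ.norm_apply _).le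
  have hC : 1 ≤ (ν : ℝ) ^ (2 * ν) + (d : ℝ) ^ m :=
    le_add_of_le_of_nonneg (one_le_pow₀ (by exact_mod_cast hν)) (by positivity)
  set r : ℝ := (Fintype.card R : ℝ) ^ (1 / ((m : ℝ) + ν)) with hr
  have hrq : r ^ (m + ν) = (Fintype.card R : ℝ) := by
    rw [hr, ← Real.rpow_mul_natCast (by positivity), Nat.cast_add,
      one_div_mul_cancel (by positivity), Real.rpow_one]
  obtain ⟨K, hK, hKr, hrK⟩ := exists_nat_le_le_two_mul
    (Real.one_le_rpow hq1 (by positivity) : 1 ≤ r)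
  have hKq : (K : ℝ) ^ (m + ν) ≤ (Fintype.card R : ℝ) :=
    (pow_le_pow_left₀ (by positivity) hKr _).trans_eq hrq
  rw [mul_assoc, ← rpow_pow_rpow (by positivity) m hν]
  have hm : m ≠ 0 := by
    rintro rfl
    exact hG.ne' (T.totalDegree_G_of_isMax fun j _ => by omega)
  refine le_of_moment_bound hm hν N.cast_nonneg hK hKr hrK hC
    ((norm_sum_le_of_le _ fun n _ => hnorm n).trans_eq (by simp))
    (mul_norm_sum_range_le hnorm N K) ?_
  rw [hrq]
  exact T.pow_sum_norm_sum_addChar_orbit_le hd hG hai ha hψ hν hK hKq hu hinj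

end IsTriangular

end BlockSums

section FSystem

theorem IsFSystem.exists_isTriangular {R : Type*} [CommRing R] {m : ℕ} {s : ℕ → ℕ → ℕ}
    {F : Fin (m + 1) → MvPolynomial (Fin (m + 1)) R} (hF : IsFSystem m s F)
    (hs : ∏ i ∈ Finset.range m, s i (i + 1) ≠ 0) :
    ∃ G H, IsTriangular F G H ∧ ∀ i ≠ Fin.last m, 0 < (G i).totalDegree := by
  have hrow (i : Fin (m + 1)) : ∃ G H, F i = X i * G + H ∧ G ∈ supported R (Set.Ioi i) ∧
      H ∈ supported R (Set.Ioi i) ∧ G ≠ 0 ∧ (i ≠ Fin.last m → 0 < G.totalDegree) := by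
    rcases eq_or_ne i (Fin.last m) with rfl | hi
    · obtain ⟨g, h, hg, hlast⟩ := hF.1
      exact ⟨C g, C h, by rw [hlast, mul_comm], algebraMap_mem _ g, algebraMap_mem _ h,
        C_ne_zero.mpr hg, fun hne => absurd rfl hne⟩
    · have him : (i : ℕ) < m := Fin.val_lt_last hi
      obtain ⟨G, H, Gt, g, hg, hFi, hG, hH, hlead, hGt, -⟩ := hF.2 i him
      have hsi : s i (i + 1) ≠ 0 := Finset.prod_ne_zero_iff.mp hs i (Finset.mem_range.mpr him)
      let j : Fin (m + 1) := ⟨i + 1, by omega⟩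
      have hij : i < j := Fin.mk_lt_mk.mpr i.val.lt_succ_self
      obtain ⟨e, he, hcoeff⟩ := exists_coeff_ne_zero_of_leading (j := j)
        (n := fun l => s i l) (Finset.mem_filter.mpr ⟨Finset.mem_univ j, hij⟩) hsi hg
        fun e he => hGt e he j hij
      rw [← hlead] at hcoeff
      exact ⟨G, H, hFi, mem_supported_Ioi hG, mem_supported_Ioi hH,
        fun h => hcoeff (by rw [h, coeff_zero]),
        fun _ => totalDegree_pos_of_coeff_ne_zero he hcoeff⟩
  choose G H hrow using hrow
  exact ⟨G, H, ⟨fun i => (hrow i).1, fun i => (hrow i).2.1, fun i => (hrow i).2.2.1,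
    fun i => (hrow i).2.2.2.1⟩, fun i => (hrow i).2.2.2.2⟩

theorem eP_eq_stdAddChar {p : ℕ} [NeZero p] (x : ZMod p) : eP p x = ZMod.stdAddChar x := by
  rw [eP, ZMod.stdAddChar_apply, ZMod.toCircle_apply]

end FSystem

theorem stmt3_general {R : Type*} [Field R] [Fintype R] {m d ν : ℕ} (hν : 1 ≤ ν) {s : ℕ → ℕ → ℕ}
    {F : Fin (m + 1) → MvPolynomial (Fin (m + 1)) R} (hF : IsFSystem m s F)
    (hd : ∀ i, (F i).totalDegree ≤ d) (hs : ∏ i ∈ Finset.range m, s i (i + 1) ≠ 0)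
    {ψ : AddChar R ℂ} (hψ : ψ.IsPrimitive) {u : ℕ → Fin (m + 1) → R}
    (hu : ∀ n, u (n + 1) = polyMap F (u n)) {N : ℕ} (hinj : Set.InjOn u (Finset.range N))
    {a : Fin m → R} (ha : a ≠ 0) :
    ‖∑ n ∈ Finset.range N, ψ (∑ i : Fin m, a i * u n i.castSucc)‖ ≤
      (2 * ((ν : ℝ) ^ (2 * ν) + (d : ℝ) ^ m) + 2) * (N : ℝ) ^ ((1 : ℝ) - 1 / (2 * (ν : ℝ))) *
        (Fintype.card R : ℝ) ^ (((m : ℝ) ^ 2 + (m : ℝ) * (ν : ℝ) + (m : ℝ)) /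
          (2 * (ν : ℝ) * ((m : ℝ) + (ν : ℝ)))) := by
  obtain ⟨G, H, T, hG⟩ := hF.exists_isTriangular hs
  obtain ⟨i₀, hi₀⟩ := Function.ne_iff.mp ha
  obtain ⟨i, hi, hai, hlt⟩ := exists_first_ne_zero (a := (Fin.snoc a 0 : Fin (m + 1) → R))
    (i₀ := i₀.castSucc) (by simpa using hi₀)
  have hGi : 0 < (G i).totalDegree := hG i (hi.trans_lt i₀.castSucc_lt_last).ne
  simpa [Fin.sum_univ_castSucc] using T.norm_sum_addChar_orbit_le hd hGi hai hlt hψ hν hu hinj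

theorem stmt3 (m d ν : ℕ) (hm : 1 ≤ m) (hd : 2 ≤ d) (hν : 1 ≤ ν) :
    ∃ c : ℝ, 0 < c ∧
      ∀ (s : ℕ → ℕ → ℕ) (p : ℕ), p.Prime →
        ∀ F : Fin (m + 1) → MvPolynomial (Fin (m + 1)) (ZMod p),
          IsFSystem m s F →
          (Finset.univ.sup fun i => (F i).totalDegree) = d →
          (∏ i ∈ Finset.range m, s i (i + 1)) ≠ 0 →
          ∀ (u : ℕ → Fin (m + 1) → ZMod p) (τ : ℕ),
            (∀ n i, u (n + 1) i = MvPolynomial.eval (u n) (F i)) →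
            0 < τ → (∀ n, u (n + τ) = u n) →
            (∀ t, 0 < t → (∀ n, u (n + t) = u n) → τ ≤ t) →
            ∀ N : ℕ, 0 < N → N ≤ τ →
              ∀ a : Fin m → ZMod p, a ≠ 0 →
                ‖∑ n ∈ Finset.range N, eP p (∑ i : Fin m, a i * u n i.castSucc)‖ ≤
                  c * (N : ℝ) ^ ((1 : ℝ) - 1 / (2 * (ν : ℝ))) *
                    (p : ℝ) ^ (((m : ℝ) ^ 2 + (m : ℝ) * (ν : ℝ) + (m : ℝ)) /
                      (2 * (ν : ℝ) * ((m : ℝ) + (ν : ℝ)))) := by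
  refine ⟨2 * ((ν : ℝ) ^ (2 * ν) + (d : ℝ) ^ m) + 2, by positivity, ?_⟩
  intro s p hp F hF hdeg hs u τ hu hτ hper hmin N _ hN a ha
  have : Fact p.Prime := ⟨hp⟩
  have hu' (n : ℕ) : u (n + 1) = polyMap F (u n) := funext (hu n)
  simpa only [eP_eq_stdAddChar, ZMod.card] using
    stmt3_general hν hF (fun i => hdeg ▸ Finset.le_sup (f := totalDegree ∘ F) (Finset.mem_univ i))
      hs (ZMod.isPrimitive_stdAddChar p) hu' (injOn_range_of_least_period hu' hτ
        (by simpa using hper 0) hmin hN) ha
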